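/- Let r₁ ≠ r₂ be points of the Euclidean plane, let p₁ and p₂ lie on segment(r₁,r₂), and let g₁, g₂ be points lying strictly on the same side of line(r₁,r₂). Define C₁ = cone(g₁, segment(p₁,r₂)) and C₂ = cone(g₂, segment(r₁,p₂)), where for a point p and a set S, cone(p,S) = {p + t(z − p) : t ≥ 0, z ∈ S}. Assume the cone-property: there exist a point b and a nonzero vector v with {b + t·v : t ≥ 0} ⊆ C₁ ∩ C₂. Let a be a point lying on both segment(g₁,r₂) and segment(g₂,r₁), with a not on line(r₁,r₂). Then cone(a, segment(r₁,r₂)) ⊆ C₁ ∪ C₂. -/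

import Mathlib

/-!
Use oblique coordinates with origin `a` and basis `e₁ = r₁ - a`, `e₂ = r₂ - a`, which are linearly
independent because `a` is off the line `r₁r₂`. Then `g₁ = (0, -s)` and `g₂ = (-u, 0)` with
`s, u ≥ 0`, while `p₁ = (1 - α, α)` and `p₂ = (β, 1 - β)`, and `cone(a, segment(r₁, r₂))` is the
closed first quadrant.

Inside the quadrant, `C₁` is cut out by `(α + s) x ≤ (1 - α) (y + s)` and, symmetrically, `C₂` by
`(β + u) y ≤ (1 - β) (x + u)` (`mem_coneOf_of_ineq`, `ineq_of_mem_coneOf`). The direction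
`(v₁, v₂)` of a common ray satisfies the homogeneous versions of these inequalities
(`ineq_of_rayDir_subset`), so `v₂/v₁` is at least the slope bounding `C₁` and at most the slope
bounding `C₂`. A point `(x, y)` of the quadrant outside both cones would have `y/x` strictly below
the first slope and strictly above the second, which is impossible.
-/

/-- The line through two points `u` and `v` of the Euclidean plane. -/
def line (u v : EuclideanSpace ℝ (Fin 2)) : Set (EuclideanSpace ℝ (Fin 2)) :=
  {p | ∃ t : ℝ, p = u + t • (v - u)}

/-- `coneOf p S` is the union of all rays with apex `p` through points of `S`. -/
def coneOf (p : EuclideanSpace ℝ (Fin 2)) (S : Set (EuclideanSpace ℝ (Fin 2))) :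
    Set (EuclideanSpace ℝ (Fin 2)) :=
  {q | ∃ t : ℝ, 0 ≤ t ∧ ∃ z ∈ S, q = p + t • (z - p)}

/-- The ray with apex `b` in direction `v`. -/
def rayDir (b v : EuclideanSpace ℝ (Fin 2)) : Set (EuclideanSpace ℝ (Fin 2)) :=
  {q | ∃ t : ℝ, 0 ≤ t ∧ q = b + t • v}

/-- The signed side function of the line through `u` and `v` (a determinant):
it vanishes exactly on the line and has a constant sign on each open half-plane. -/
def sideFn (u v p : EuclideanSpace ℝ (Fin 2)) : ℝ :=
  (v 0 - u 0) * (p 1 - u 1) - (v 1 - u 1) * (p 0 - u 0)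

local notation "Plane" => EuclideanSpace ℝ (Fin 2)

/-- A point on which `sideFn u v` vanishes lies on the line through `u ≠ v`. -/
lemma mem_line_of_sideFn_eq_zero {u v p : Plane} (huv : u ≠ v) (h : sideFn u v p = 0) :
    p ∈ line u v := by
  unfold sideFn at h
  by_cases h0 : v 0 - u 0 = 0
  · have h1 : v 1 - u 1 ≠ 0 := by
      intro h1
      apply huv
      ext i
      fin_cases i
      · simpa using (sub_eq_zero.mp h0).symm
      · simpa using (sub_eq_zero.mp h1).symm
    refine ⟨(p 1 - u 1) / (v 1 - u 1), ?_⟩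
    ext i
    fin_cases i
    · simp
      field_simp
      linear_combination -h
    · simp
      field_simp
      ring
  · refine ⟨(p 0 - u 0) / (v 0 - u 0), ?_⟩
    ext i
    fin_cases i
    · simp
      field_simp
      ring
    · simp
      field_simp
      linear_combination h

/-- Cramer's rule: two vectors with nonzero determinant span the plane. -/
lemma exists_coords {e₁ e₂ : Plane} (hD : e₁ 0 * e₂ 1 - e₁ 1 * e₂ 0 ≠ 0) (w : Plane) :
    ∃ x y : ℝ, w = x • e₁ + y • e₂ := by
  refine ⟨(w 0 * e₂ 1 - w 1 * e₂ 0) / (e₁ 0 * e₂ 1 - e₁ 1 * e₂ 0),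
    (e₁ 0 * w 1 - e₁ 1 * w 0) / (e₁ 0 * e₂ 1 - e₁ 1 * e₂ 0), ?_⟩
  ext i
  fin_cases i <;> simp <;> rw [div_mul_eq_mul_div, div_mul_eq_mul_div, ← add_div, eq_div_iff hD] <;>
    ring

lemma coords_unique {e₁ e₂ : Plane} (hD : e₁ 0 * e₂ 1 - e₁ 1 * e₂ 0 ≠ 0) {x y x' y' : ℝ}
    (h : x • e₁ + y • e₂ = x' • e₁ + y' • e₂) : x = x' ∧ y = y' := by
  have h0 := congrArg (fun w : Plane => w 0) h
  have h1 := congrArg (fun w : Plane => w 1) h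
  simp only [PiLp.add_apply, PiLp.smul_apply, smul_eq_mul] at h0 h1
  constructor
  · apply mul_right_cancel₀ hD
    linear_combination e₂ 1 * h0 - e₂ 0 * h1
  · apply mul_right_cancel₀ hD
    linear_combination e₁ 0 * h1 - e₁ 1 * h0

lemma exists_eq_sub_smul {a g r : Plane} (h : a ∈ segment ℝ g r) (har : a ≠ r) :
    ∃ s : ℝ, 0 ≤ s ∧ g = a - s • (r - a) := by
  obtain ⟨c, d, hc, hd, hcd, rfl⟩ := h
  have hc0 : c ≠ 0 := by
    rintro rfl
    apply har
    have hd1 : d = 1 := by linarith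
    simp [hd1]
  refine ⟨d / c, by positivity, ?_⟩
  obtain rfl : d = 1 - c := by linarith
  ext i
  simp
  field_simp
  ring

lemma exists_segment_coords {a r₁ r₂ p : Plane} (h : p ∈ segment ℝ r₁ r₂) :
    ∃ α : ℝ, 0 ≤ α ∧ α ≤ 1 ∧ p = a + ((1 - α) • (r₁ - a) + α • (r₂ - a)) := by
  obtain ⟨c, d, hc, hd, hcd, rfl⟩ := h
  obtain rfl : c = 1 - d := by linarith
  exact ⟨d, hd, by linarith, by module⟩

/-- Points of the first quadrant on the correct side of the line through the apex `(0, -s)` and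
`(1 - α, α)` lie in the cone with that apex over the segment from `(1 - α, α)` to `(0, 1)`. -/
lemma mem_coneOf_of_ineq {a e₁ e₂ : Plane} {s α x y : ℝ} (hs : 0 ≤ s)
    (hx : 0 ≤ x) (hy : 0 ≤ y) (h : (α + s) * x ≤ (1 - α) * (y + s)) :
    a + (x • e₁ + y • e₂) ∈
      coneOf (a - s • e₂) (segment ℝ (a + ((1 - α) • e₁ + α • e₂)) (a + e₂)) := by
  rcases (add_nonneg (add_nonneg hx hy) hs).eq_or_lt with h0 | h0
  · have hx0 : x = 0 := by linarith
    have hy0 : y = 0 := by linarith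
    have hs0 : s = 0 := by linarith
    subst hx0 hy0 hs0
    exact ⟨0, le_rfl, a + e₂, right_mem_segment _ _ _, by module⟩
  have hs1 : 0 < 1 + s := by linarith
  -- The ray from the apex through `(x, y)` meets `x + y = 1` at `(x / t, 1 - x / t)`.
  obtain ⟨t, htpos, hty⟩ : ∃ t : ℝ, 0 < t ∧ t * (1 + s) = x + y + s :=
    ⟨(x + y + s) / (1 + s), by positivity, by field_simp⟩
  have hxt : x ≤ t * (1 - α) := by
    apply le_of_mul_le_mul_right _ hs1
    have : t * (1 - α) * (1 + s) = (1 - α) * (x + y + s) := by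
      rw [← hty]
      ring
    linarith
  refine ⟨t, htpos.le, a + ((x / t) • e₁ + (1 - x / t) • e₂), ?_, ?_⟩
  · by_cases hα : 1 - α = 0
    · have hx0 : x = 0 := by
        rw [hα] at hxt
        linarith
      subst hx0
      convert right_mem_segment ℝ (a + ((1 - α) • e₁ + α • e₂)) (a + e₂) using 1
      simp
    · have hα' : 0 < 1 - α := by
        rcases lt_or_gt_of_ne hα with h' | h'
        · nlinarith
        · exact h'
      refine ⟨x / (t * (1 - α)), 1 - x / (t * (1 - α)), by positivity, ?_, by ring, ?_⟩
      · have := div_le_one_of_le₀ hxt (by positivity)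
        linarith
      · have hk : x / t = x / (t * (1 - α)) * (1 - α) := by field_simp
        rw [hk]
        module
  · have h1 : t * (x / t) = x := by field_simp
    obtain rfl : y = t * (1 + s) - x - s := by linarith
    generalize x / t = k at h1 ⊢
    subst h1
    module

/-- The half-plane inequalities satisfied by the points of the cone of `mem_coneOf_of_ineq`. -/
lemma ineq_of_mem_coneOf {a e₁ e₂ : Plane} (hD : e₁ 0 * e₂ 1 - e₁ 1 * e₂ 0 ≠ 0)
    {s α x y : ℝ} (hs : 0 ≤ s) (hα : α ≤ 1)
    (h : a + (x • e₁ + y • e₂) ∈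
      coneOf (a - s • e₂) (segment ℝ (a + ((1 - α) • e₁ + α • e₂)) (a + e₂))) :
    0 ≤ x ∧ (α + s) * x ≤ (1 - α) * (y + s) := by
  obtain ⟨t, ht, z, ⟨c, d, hc, hd, hcd, rfl⟩, h⟩ := h
  obtain rfl : c = 1 - d := by linarith
  obtain ⟨rfl, rfl⟩ := coords_unique hD (x := x) (y := y) (x' := t * ((1 - d) * (1 - α)))
    (y' := t * ((1 - d) * α + d + s) - s) (by
      apply add_left_cancel (a := a)
      rw [h]
      module)
  have hα' : 0 ≤ 1 - α := by linarith
  refine ⟨by positivity, ?_⟩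
  have : 0 ≤ t * (1 - α) * d * (1 + s) := by positivity
  linarith

lemma slope_nonneg {A B : ℝ} (h : ∀ t : ℝ, 0 ≤ t → 0 ≤ A + t * B) : 0 ≤ B := by
  by_contra! hB
  have h1 := h ((|A| + 1) / (-B)) (div_nonneg (by positivity) (by linarith))
  have h2 : (|A| + 1) / (-B) * B = -(|A| + 1) := by
    have := hB.ne
    field_simp
  linarith [le_abs_self A]

/-- The direction of a ray contained in the cone of `mem_coneOf_of_ineq` satisfies the homogeneous
versions of the inequalities defining the cone. -/
lemma ineq_of_rayDir_subset {a e₁ e₂ b : Plane} (hD : e₁ 0 * e₂ 1 - e₁ 1 * e₂ 0 ≠ 0)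
    {s α v₁ v₂ : ℝ} (hs : 0 ≤ s) (hα : α ≤ 1)
    (h : rayDir b (v₁ • e₁ + v₂ • e₂) ⊆
      coneOf (a - s • e₂) (segment ℝ (a + ((1 - α) • e₁ + α • e₂)) (a + e₂))) :
    0 ≤ v₁ ∧ (α + s) * v₁ ≤ (1 - α) * v₂ := by
  obtain ⟨b₁, b₂, hb⟩ := exists_coords hD (b - a)
  have key : ∀ t : ℝ, 0 ≤ t → 0 ≤ b₁ + t * v₁ ∧
      (α + s) * (b₁ + t * v₁) ≤ (1 - α) * (b₂ + t * v₂ + s) := by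
    intro t ht
    apply ineq_of_mem_coneOf hD hs hα (a := a)
    apply h
    refine ⟨t, ht, ?_⟩
    rw [← sub_add_cancel b a, hb]
    module
  refine ⟨slope_nonneg fun t ht => (key t ht).1, ?_⟩
  have : 0 ≤ (1 - α) * v₂ - (α + s) * v₁ :=
    slope_nonneg (A := (1 - α) * (b₂ + s) - (α + s) * b₁) fun t ht => by
      linarith [(key t ht).2]
  linarith

/-- The comparison of slopes: if a nonzero direction `(v₁, v₂)` of the quadrant satisfies both
homogeneous inequalities, every point of the quadrant satisfies one of them. -/
lemma ineq_or_ineq {A B C D v₁ v₂ x y : ℝ} (hA : 0 ≤ A) (hB : 0 ≤ B) (hC : 0 ≤ C) (hD : 0 ≤ D)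
    (hv₁ : 0 ≤ v₁) (hv₂ : 0 ≤ v₂) (hv : 0 < v₁ ∨ 0 < v₂)
    (h₁ : A * v₁ ≤ B * v₂) (h₂ : C * v₂ ≤ D * v₁) (hx : 0 ≤ x) (hy : 0 ≤ y) :
    A * x ≤ B * y ∨ C * y ≤ D * x := by
  rcases le_total (v₁ * y) (v₂ * x) with h | h
  · rcases hv₁.eq_or_lt with rfl | hv₁
    · right
      have hv₂ : 0 < v₂ := hv.resolve_left (lt_irrefl _)
      have : C = 0 := by nlinarith
      rw [this, zero_mul]
      positivity
    · right
      apply le_of_mul_le_mul_left _ hv₁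
      nlinarith [mul_le_mul_of_nonneg_left h hC, mul_le_mul_of_nonneg_right h₂ hx]
  · rcases hv₂.eq_or_lt with rfl | hv₂
    · left
      have hv₁ : 0 < v₁ := hv.resolve_right (lt_irrefl _)
      have : A = 0 := by nlinarith
      rw [this, zero_mul]
      positivity
    · left
      apply le_of_mul_le_mul_left _ hv₂
      nlinarith [mul_le_mul_of_nonneg_left h hA, mul_le_mul_of_nonneg_right h₁ hy]

/-- New cone: let `p₁, p₂ ∈ segment(r₁,r₂)`, let `g₁, g₂` be strictly on the same side of
`line(r₁,r₂)`, let `C₁ = cone(g₁, segment(p₁,r₂))` and `C₂ = cone(g₂, segment(r₁,p₂))`,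
and assume the cone-property: some ray is contained in `C₁ ∩ C₂`.  If `a` lies on both
`segment(g₁,r₂)` and `segment(g₂,r₁)` and not on `line(r₁,r₂)`, then
`cone(a, segment(r₁,r₂)) ⊆ C₁ ∪ C₂`. -/
theorem new_cone
    (r₁ r₂ p₁ p₂ g₁ g₂ a : EuclideanSpace ℝ (Fin 2))
    (hne : r₁ ≠ r₂)
    (hp₁ : p₁ ∈ segment ℝ r₁ r₂) (hp₂ : p₂ ∈ segment ℝ r₁ r₂)
    (hg₁ : sideFn r₁ r₂ g₁ ≠ 0) (hg₂ : sideFn r₁ r₂ g₂ ≠ 0)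
    (hsame : 0 < sideFn r₁ r₂ g₁ * sideFn r₁ r₂ g₂)
    (hconeprop : ∃ b v : EuclideanSpace ℝ (Fin 2), v ≠ 0 ∧
      rayDir b v ⊆ coneOf g₁ (segment ℝ p₁ r₂) ∩ coneOf g₂ (segment ℝ r₁ p₂))
    (ha₁ : a ∈ segment ℝ g₁ r₂) (ha₂ : a ∈ segment ℝ g₂ r₁)
    (haline : a ∉ line r₁ r₂) :
    coneOf a (segment ℝ r₁ r₂) ⊆
      coneOf g₁ (segment ℝ p₁ r₂) ∪ coneOf g₂ (segment ℝ r₁ p₂) := by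
  have hr₁ : a ≠ r₁ := by
    rintro rfl
    exact haline ⟨0, by simp⟩
  have hr₂ : a ≠ r₂ := by
    rintro rfl
    exact haline ⟨1, by simp⟩
  obtain ⟨s, hs, hgs⟩ := exists_eq_sub_smul ha₁ hr₂
  obtain ⟨u, hu, hgu⟩ := exists_eq_sub_smul ha₂ hr₁
  obtain ⟨α, hα0, hα1, hpα⟩ := exists_segment_coords (a := a) hp₁
  obtain ⟨β, hβ0, hβ1, hpβ⟩ := exists_segment_coords (a := a) (segment_symm ℝ r₁ r₂ ▸ hp₂)
  have hside : sideFn r₁ r₂ a ≠ 0 := fun h => haline (mem_line_of_sideFn_eq_zero hne h)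
  rw [segment_symm ℝ r₁ p₂] at hconeprop ⊢
  obtain ⟨e₁, he₁⟩ : ∃ e, e = r₁ - a := ⟨_, rfl⟩
  obtain ⟨e₂, he₂⟩ : ∃ e, e = r₂ - a := ⟨_, rfl⟩
  obtain rfl : r₁ = a + e₁ := by rw [he₁]; abel
  obtain rfl : r₂ = a + e₂ := by rw [he₂]; abel
  simp only [add_sub_cancel_left] at hgs hgu hpα hpβ
  subst hgs hgu hpα hpβ
  have hD : e₁ 0 * e₂ 1 - e₁ 1 * e₂ 0 ≠ 0 := by
    intro h
    apply hside
    simp only [sideFn, PiLp.add_apply]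
    linear_combination h
  have hD' : e₂ 0 * e₁ 1 - e₂ 1 * e₁ 0 ≠ 0 := by
    intro h
    apply hD
    linear_combination -h
  obtain ⟨b, v, hv, hray⟩ := hconeprop
  obtain ⟨v₁, v₂, rfl⟩ := exists_coords hD v
  obtain ⟨hv₁, h₁⟩ := ineq_of_rayDir_subset hD hs hα1 (hray.trans Set.inter_subset_left)
  -- Exchanging the two basis vectors turns `C₂` into a cone of the same shape as `C₁`.
  obtain ⟨hv₂, h₂⟩ := ineq_of_rayDir_subset (a := a) (b := b) (v₁ := v₂) (v₂ := v₁) hD' hu hβ1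
    (by rw [add_comm (v₂ • e₂)]; exact hray.trans Set.inter_subset_right)
  have hvpos : 0 < v₁ ∨ 0 < v₂ := by
    by_contra! h
    apply hv
    rw [le_antisymm h.1 hv₁, le_antisymm h.2 hv₂]
    simp
  rintro q ⟨t, ht, z, ⟨c, d, hc, hd, hcd, rfl⟩, rfl⟩
  obtain rfl : c = 1 - d := by linarith
  have hq : a + t • ((1 - d) • (a + e₁) + d • (a + e₂) - a) =
      a + ((t * (1 - d)) • e₁ + (t * d) • e₂) := by module
  rw [hq]
  have hx : 0 ≤ t * (1 - d) := mul_nonneg ht hc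
  have hy : 0 ≤ t * d := mul_nonneg ht hd
  rcases ineq_or_ineq (add_nonneg hα0 hs) (sub_nonneg.mpr hα1) (add_nonneg hβ0 hu)
    (sub_nonneg.mpr hβ1) hv₁ hv₂ hvpos h₁ h₂ hx hy with h | h
  · left
    refine mem_coneOf_of_ineq hs hx hy ?_
    nlinarith
  · right
    rw [add_comm (_ • e₁)]
    refine mem_coneOf_of_ineq hu hy hx ?_
    nlinarith
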